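/- Let Γ be an access structure on 6 players satisfying monotonicity, no-cloning and no-redundancy that admits a pure QSS state. Then Γ_min contains at most one set of cardinality 2. -/

import Mathlib

open Finset

/-- Monotonicity of an access structure on `n` players (players = `Fin n`). -/
def Monotonic {n : ℕ} (Γ : Finset (Fin n) → Prop) : Prop :=
  ∀ A B : Finset (Fin n), Γ A → A ⊆ B → Γ B

/-- No-cloning: a set is authorized iff its complement is not. -/
def NoCloning {n : ℕ} (Γ : Finset (Fin n) → Prop) : Prop :=
  ∀ A : Finset (Fin n), Γ A ↔ ¬ Γ Aᶜ

/-- `A` is a minimal authorized set of `Γ`. -/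
def IsMinimal {n : ℕ} (Γ : Finset (Fin n) → Prop) (A : Finset (Fin n)) : Prop :=
  Γ A ∧ ∀ B : Finset (Fin n), B ⊂ A → ¬ Γ B

/-- No-redundancy: every player lies in some minimal authorized set. -/
def NoRedundancy {n : ℕ} (Γ : Finset (Fin n) → Prop) : Prop :=
  ∀ i : Fin n, ∃ A : Finset (Fin n), IsMinimal Γ A ∧ i ∈ A

noncomputable section

/-- Combine an assignment on `A` and one on `Aᶜ` into a full bit string. -/
def glue {m : ℕ} (A : Finset (Fin m)) (u : {x // x ∈ A} → Fin 2)
    (w : {x // x ∈ Aᶜ} → Fin 2) : Fin m → Fin 2 :=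
  fun x => if h : x ∈ A then u ⟨x, h⟩ else w ⟨x, Finset.mem_compl.mpr h⟩

/-- Reduced density matrix of the pure state `ψ` on the qubit positions in `A`:
the partial trace over the positions outside `A` of `ψψ†`. -/
def reducedDensity {m : ℕ} (ψ : (Fin m → Fin 2) → ℂ) (A : Finset (Fin m)) :
    Matrix ({x // x ∈ A} → Fin 2) ({x // x ∈ A} → Fin 2) ℂ :=
  fun u v => ∑ w : {x // x ∈ Aᶜ} → Fin 2,
    ψ (glue A u w) * (starRingEnd ℂ) (ψ (glue A v w))

/-- The reduction of `ψ` to `A` is maximally mixed, i.e. equals `2^{-|A|} · I`. -/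
def MaximallyMixed {m : ℕ} (ψ : (Fin m → Fin 2) → ℂ) (A : Finset (Fin m)) : Prop :=
  reducedDensity ψ A =
    ((2 : ℂ) ^ A.card)⁻¹ •
      (1 : Matrix ({x // x ∈ A} → Fin 2) ({x // x ∈ A} → Fin 2) ℂ)

open Classical in
/-- Von Neumann entropy (natural logarithm): sum of `-λ log λ` over the eigenvalues. -/
def vnEntropy {ι : Type} [Fintype ι] [DecidableEq ι] (ρ : Matrix ι ι ℂ) : ℝ :=
  if h : ρ.IsHermitian then ∑ i, Real.negMulLog (h.eigenvalues i) else 0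

/-- Entropy of the reduction of `ψ` to the set `A` of qubit positions. -/
def Sent {m : ℕ} (ψ : (Fin m → Fin 2) → ℂ) (A : Finset (Fin m)) : ℝ :=
  vnEntropy (reducedDensity ψ A)

/-- The qubit positions (in `{0,1,…,n} = Fin (n+1)`, where `0` is the reference qubit)
of a set of players `A ⊆ Fin n`: player `i` holds position `i.succ`. -/
def posOf {n : ℕ} (A : Finset (Fin n)) : Finset (Fin (n + 1)) := A.image Fin.succ

/-- `ψ` is a pure QSS state for the access structure `Γ`: a normalized pure state of
`n+1` qubits (position `0` being the reference qubit `R`) satisfying Recoverability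
`S(R) + S(A) - S(R ∪ A) = 2 log 2` for authorized `A` and Secrecy
`S(R) + S(B) - S(R ∪ B) = 0` for unauthorized `B`. -/
structure IsPureQSSState {n : ℕ} (Γ : Finset (Fin n) → Prop)
    (ψ : (Fin (n + 1) → Fin 2) → ℂ) : Prop where
  normalized : ∑ x : Fin (n + 1) → Fin 2, ‖ψ x‖ ^ 2 = 1
  recover : ∀ A : Finset (Fin n), Γ A →
    Sent ψ {0} + Sent ψ (posOf A) - Sent ψ (insert 0 (posOf A)) = 2 * Real.log 2
  secrecy : ∀ B : Finset (Fin n), ¬ Γ B →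
    Sent ψ {0} + Sent ψ (posOf B) - Sent ψ (insert 0 (posOf B)) = 0

end

section Helpers
open Matrix
open scoped ComplexOrder

lemma vn_charpoly {ι : Type} [Fintype ι] [DecidableEq ι] {ρ : Matrix ι ι ℂ} (h : ρ.IsHermitian) :
    vnEntropy ρ = (ρ.charpoly.roots.map (fun z => Real.negMulLog z.re)).sum := by
  rw [h.roots_charpoly_eq_eigenvalues]
  unfold vnEntropy
  rw [dif_pos h, Multiset.map_map]
  show _ = ∑ i, _
  simp

lemma vn_congr {ι κ : Type} [Fintype ι] [DecidableEq ι] [Fintype κ] [DecidableEq κ]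
    {ρ : Matrix ι ι ℂ} {σ : Matrix κ κ ℂ} (hρ : ρ.IsHermitian) (hσ : σ.IsHermitian)
    (a b : ℕ) (h : Polynomial.X ^ a * ρ.charpoly = Polynomial.X ^ b * σ.charpoly) :
    vnEntropy ρ = vnEntropy σ := by
  rw [vn_charpoly hρ, vn_charpoly hσ]
  have h2 := congrArg (fun p : Polynomial ℂ => (p.roots.map (fun z => Real.negMulLog z.re)).sum) h
  have e1 : Polynomial.X ^ a * ρ.charpoly ≠ 0 :=
    mul_ne_zero (pow_ne_zero _ Polynomial.X_ne_zero) (Matrix.charpoly_monic ρ).ne_zero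
  have e2 : Polynomial.X ^ b * σ.charpoly ≠ 0 :=
    mul_ne_zero (pow_ne_zero _ Polynomial.X_ne_zero) (Matrix.charpoly_monic σ).ne_zero
  simp only [Polynomial.roots_mul e1, Polynomial.roots_mul e2, Multiset.map_add,
    Multiset.sum_add, Polynomial.roots_X_pow, Multiset.map_nsmul, Multiset.map_singleton, Multiset.sum_nsmul,
    Multiset.sum_singleton] at h2
  simpa using h2

lemma vn_submatrix {ι κ : Type} [Fintype ι] [DecidableEq ι] [Fintype κ] [DecidableEq κ]
    {ρ : Matrix ι ι ℂ} (hρ : ρ.IsHermitian) (e : κ ≃ ι) :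
    vnEntropy (ρ.submatrix e e) = vnEntropy ρ := by
  apply vn_congr (hρ.submatrix e) hρ 0 0
  have := Matrix.charpoly_reindex e.symm ρ
  simpa [Matrix.reindex_apply] using this

lemma vn_swap {ι κ : Type} [Fintype ι] [DecidableEq ι] [Fintype κ] [DecidableEq κ]
    (M : Matrix ι κ ℂ) : vnEntropy (M * Mᴴ) = vnEntropy (Mᵀ * Mᵀᴴ) := by
  apply vn_congr (isHermitian_mul_conjTranspose_self M) (isHermitian_mul_conjTranspose_self Mᵀ)
    (Fintype.card κ) (Fintype.card ι)
  rw [Matrix.charpoly_mul_comm']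
  congr 1
  rw [← Matrix.charpoly_transpose, Matrix.transpose_mul]
  rfl

lemma spec {ι : Type} [Fintype ι] [DecidableEq ι] {ρ : Matrix ι ι ℂ} (h : ρ.IsHermitian) :
    ∃ (U : Matrix ι ι ℂ) (p : ι → ℝ), Uᴴ * U = 1 ∧ U * Uᴴ = 1 ∧
      ρ = U * diagonal (fun i => (p i : ℂ)) * Uᴴ ∧ vnEntropy ρ = ∑ i, Real.negMulLog (p i) := by
  refine ⟨h.eigenvectorUnitary, h.eigenvalues, ?_, ?_, ?_, ?_⟩
  · exact Unitary.coe_star_mul_self h.eigenvectorUnitary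
  · exact Unitary.coe_mul_star_self h.eigenvectorUnitary
  · have := h.spectral_theorem
    rw [Unitary.conjStarAlgAut_apply] at this
    exact this
  · unfold vnEntropy
    rw [dif_pos h]

lemma spec_diag {ι : Type} [Fintype ι] [DecidableEq ι] {ρ U : Matrix ι ι ℂ} {p : ι → ℝ}
    (hU : Uᴴ * U = 1) (h : ρ = U * diagonal (fun i => (p i : ℂ)) * Uᴴ) :
    Uᴴ * ρ * U = diagonal (fun i => (p i : ℂ)) := by
  rw [h]
  calc _ = (Uᴴ * U) * diagonal (fun i => (p i : ℂ)) * (Uᴴ * U) := by simp only [Matrix.mul_assoc]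
    _ = _ := by simp [hU]

lemma spec_nonneg {ι : Type} [Fintype ι] [DecidableEq ι] {ρ U : Matrix ι ι ℂ} {p : ι → ℝ}
    (hU : Uᴴ * U = 1) (h : ρ = U * diagonal (fun i => (p i : ℂ)) * Uᴴ) (hρ : ρ.PosSemidef) (i : ι) :
    0 ≤ p i := by
  have h1 := hρ.conjTranspose_mul_mul_same U
  rw [spec_diag hU h] at h1
  have := h1.diag_nonneg (i := i)
  simpa using this

lemma spec_trace {ι : Type} [Fintype ι] [DecidableEq ι] {ρ U : Matrix ι ι ℂ} {p : ι → ℝ}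
    (hU : Uᴴ * U = 1) (h : ρ = U * diagonal (fun i => (p i : ℂ)) * Uᴴ) :
    ρ.trace = ((∑ i, p i : ℝ) : ℂ) := by
  rw [h, Matrix.trace_mul_comm, ← Matrix.mul_assoc, hU, Matrix.one_mul, Matrix.trace_diagonal]
  simp

lemma nml_le {p q : ℝ} (hp : 0 ≤ p) (hq : 0 < q) :
    Real.negMulLog p ≤ -p * Real.log q + q - p := by
  rcases hp.eq_or_lt with rfl | hp
  · simp [hq.le]
  · have := Real.log_le_sub_one_of_pos (div_pos hq hp)
    rw [Real.log_div hq.ne' hp.ne'] at this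
    have h2 := mul_le_mul_of_nonneg_left this hp.le
    have h3 : p * (q / p - 1) = q - p := by field_simp
    rw [h3] at h2
    unfold Real.negMulLog
    linarith

lemma nml_eq {p q : ℝ} (hp : 0 ≤ p) (hq : 0 < q)
    (h : Real.negMulLog p = -p * Real.log q + q - p) : p = q := by
  rcases hp.eq_or_lt with rfl | hp
  · simp at h; exact h
  · by_contra hne
    have := Real.log_lt_sub_one_of_pos (div_pos hq hp) (by
      intro h'; rw [div_eq_one_iff_eq hp.ne'] at h'; exact hne h'.symm)
    rw [Real.log_div hq.ne' hp.ne'] at this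
    have h2 := mul_lt_mul_of_pos_left this hp
    have h3 : p * (q / p - 1) = q - p := by field_simp
    rw [h3] at h2
    unfold Real.negMulLog at h
    linarith

/-- entropy bound by log of the dimension -/
lemma vn_le_log {ι : Type} [Fintype ι] [DecidableEq ι] [Nonempty ι] {ρ : Matrix ι ι ℂ}
    (hρ : ρ.PosSemidef) (ht : ρ.trace = 1) :
    vnEntropy ρ ≤ Real.log (Fintype.card ι) ∧ (vnEntropy ρ = Real.log (Fintype.card ι) →
      ρ = ((Fintype.card ι : ℂ))⁻¹ • (1 : Matrix ι ι ℂ)) := by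
  obtain ⟨U, p, hU, hU', h, hS⟩ := spec hρ.1
  have hp := spec_nonneg hU h hρ
  have hs : ∑ i, p i = 1 := by
    have := spec_trace hU h
    rw [ht] at this; exact_mod_cast this.symm
  have hd : (0 : ℝ) < Fintype.card ι := by exact_mod_cast Fintype.card_pos
  set d : ℝ := ((Fintype.card ι : ℕ) : ℝ)
  have key : ∀ i ∈ Finset.univ, Real.negMulLog (p i) ≤ -p i * Real.log d⁻¹ + d⁻¹ - p i :=
    fun i _ => nml_le (hp i) (inv_pos.mpr hd)
  have hsum : ∑ i, (-p i * Real.log d⁻¹ + d⁻¹ - p i) = Real.log d := by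
    rw [Finset.sum_sub_distrib, Finset.sum_add_distrib, ← Finset.sum_mul, Finset.sum_neg_distrib, hs]
    simp [d]
  rw [hS]
  refine ⟨(Finset.sum_le_sum key).trans hsum.le, fun he => ?_⟩
  have h3 := (Finset.sum_eq_sum_iff_of_le key).1 (he.trans hsum.symm)
  have h4 : p = fun _ => d⁻¹ := by
    ext i; exact nml_eq (hp i) (inv_pos.mpr hd) (h3 i (Finset.mem_univ i))
  have h5 : diagonal (fun i => (p i : ℂ)) = ((Fintype.card ι : ℂ))⁻¹ • (1 : Matrix ι ι ℂ) := by
    rw [h4, Matrix.smul_one_eq_diagonal]; simp [d]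
  rw [h, h5]
  simp [hU']

/-- flatness -/
lemma vn_flat {ι : Type} [Fintype ι] [DecidableEq ι] {ρ : Matrix ι ι ℂ}
    (hρ : ρ.PosSemidef) (ht : ρ.trace = 1)
    (hle : ((2 : ℂ)⁻¹ • (1 : Matrix ι ι ℂ) - ρ).PosSemidef) (hS : vnEntropy ρ = Real.log 2) :
    ρ * ρ = (2 : ℂ)⁻¹ • ρ := by
  obtain ⟨U, p, hU, hU', h, hS'⟩ := spec hρ.1
  have hp := spec_nonneg hU h hρ
  have hs : ∑ i, p i = 1 := by
    have := spec_trace hU h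
    rw [ht] at this; exact_mod_cast this.symm
  have hp2 : ∀ i, p i ≤ 1 / 2 := by
    intro i
    have h1 := hle.conjTranspose_mul_mul_same U
    rw [Matrix.mul_sub, Matrix.sub_mul, spec_diag hU h] at h1
    have := h1.diag_nonneg (i := i)
    simp [hU] at this
    have h2 : ((p i : ℝ) : ℂ) ≤ ((2⁻¹ : ℝ) : ℂ) := by push_cast; exact this
    have := Complex.real_le_real.1 h2
    linarith
  have key : ∀ i ∈ Finset.univ, p i * Real.log 2 ≤ Real.negMulLog (p i) := by
    intro i _
    rcases (hp i).eq_or_lt with h0 | h0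
    · simp [← h0]
    · have := Real.log_le_log h0 (hp2 i)
      rw [one_div, Real.log_inv] at this
      unfold Real.negMulLog
      nlinarith
  have he : ∑ i, p i * Real.log 2 = ∑ i, Real.negMulLog (p i) := by
    rw [← Finset.sum_mul, hs, ← hS', hS, one_mul]
  have h3 := (Finset.sum_eq_sum_iff_of_le key).1 he
  have h4 : ∀ i, p i * p i = 2⁻¹ * p i := by
    intro i
    rcases (hp i).eq_or_lt with h0 | h0
    · simp [← h0]
    · have := h3 i (Finset.mem_univ i)
      unfold Real.negMulLog at this
      have h5 : Real.log (p i) = Real.log 2⁻¹ := by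
        rw [Real.log_inv]; 
        have : p i * (Real.log 2 + Real.log (p i)) = 0 := by linarith
        rcases mul_eq_zero.1 this with h | h <;> linarith
      have := Real.log_injOn_pos (Set.mem_Ioi.2 h0) (Set.mem_Ioi.2 (by norm_num)) h5
      rw [this]
  have h6 : diagonal (fun i => (p i : ℂ)) * diagonal (fun i => (p i : ℂ)) =
      (2 : ℂ)⁻¹ • diagonal (fun i => (p i : ℂ)) := by
    rw [Matrix.diagonal_mul_diagonal, ← Matrix.diagonal_smul]
    congr 1; ext i
    have := h4 i
    simp only [Pi.smul_apply, smul_eq_mul]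
    have h7 := congrArg (fun x : ℝ => (x : ℂ)) this
    push_cast at h7
    exact h7
  calc ρ * ρ = U * (diagonal (fun i => (p i : ℂ)) * (Uᴴ * U) * diagonal (fun i => (p i : ℂ))) * Uᴴ := by
        rw [h]; simp only [Matrix.mul_assoc]
    _ = _ := by rw [hU, Matrix.mul_one, h6]; rw [h]; simp

/-- a support projection-like operator of trace one forces zero entropy -/
lemma vn_pure {ι : Type} [Fintype ι] [DecidableEq ι] {σ T : Matrix ι ι ℂ}
    (hσ : σ.PosSemidef) (ht : σ.trace = 1) (hT : T.PosSemidef) (hT1 : T.trace = 1)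
    (hTs : T * σ = σ) : vnEntropy σ ≤ 0 := by
  obtain ⟨U, p, hU, hU', h, hS⟩ := spec hσ.1
  have hp := spec_nonneg hU h hσ
  have hs : ∑ i, p i = 1 := by
    have := spec_trace hU h
    rw [ht] at this; exact_mod_cast this.symm
  have hK := hT.conjTranspose_mul_mul_same U
  set K := Uᴴ * T * U with hKdef
  have hKt : K.trace = 1 := by
    rw [hKdef, Matrix.trace_mul_comm, ← Matrix.mul_assoc, hU', Matrix.one_mul, hT1]
  have hKd : K * diagonal (fun i => (p i : ℂ)) = diagonal (fun i => (p i : ℂ)) := by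
    rw [← spec_diag hU h, hKdef]
    calc _ = Uᴴ * (T * ((U * Uᴴ) * σ)) * U := by simp only [Matrix.mul_assoc]
      _ = _ := by rw [hU', Matrix.one_mul, hTs]
  have hKi : ∀ i, p i ≠ 0 → K i i = 1 := by
    intro i hi
    have := congrFun (congrFun hKd i) i
    rw [Matrix.mul_diagonal, Matrix.diagonal_apply_eq] at this
    have hi' : (p i : ℂ) ≠ 0 := by exact_mod_cast hi
    exact mul_right_cancel₀ hi' (by rw [this, one_mul])
  have key : ∀ i ∈ Finset.univ, Real.negMulLog (p i) ≤ (K i i).re - p i := by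
    intro i _
    by_cases hi : p i = 0
    · have := hK.diag_nonneg (i := i)
      simp [hi]
      exact (Complex.le_def.1 this).1
    · rw [hKi i hi]
      have := nml_le (hp i) one_pos
      simpa using this
  have hk : ∑ i, (K i i).re = 1 := by
    have := congrArg Complex.re hKt
    simpa [Matrix.trace] using this
  rw [hS]
  refine (Finset.sum_le_sum key).trans ?_
  rw [Finset.sum_sub_distrib, hk, hs]; simp

/-- Klein type inequality in the standard basis -/
lemma vn_klein {ι : Type} [Fintype ι] [DecidableEq ι] {ρ : Matrix ι ι ℂ} (hρ : ρ.PosSemidef)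
    (q : ι → ℝ) (hq : ∀ j, 0 ≤ q j) (hq0 : ∀ j, q j = 0 → (ρ j j).re = 0)
    (hqs : ∑ j, q j ≤ ∑ j, (ρ j j).re) :
    vnEntropy ρ ≤ - ∑ j, (ρ j j).re * Real.log (q j) := by
  obtain ⟨U, p, hU, hU', h, hS⟩ := spec hρ.1
  have hp := spec_nonneg hU h hρ
  set w : ι → ι → ℝ := fun i j => Complex.normSq (U j i) with hw
  have hw0 : ∀ i j, 0 ≤ w i j := fun i j => Complex.normSq_nonneg _
  have hw1 : ∀ i, ∑ j, w i j = 1 := by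
    intro i
    have := congrFun (congrFun hU i) i
    rw [Matrix.mul_apply] at this
    simp only [Matrix.conjTranspose_apply, Matrix.one_apply_eq] at this
    have h2 : ((∑ j, w i j : ℝ) : ℂ) = 1 := by
      rw [← this]; push_cast
      refine Finset.sum_congr rfl fun j _ => ?_
      exact Complex.normSq_eq_conj_mul_self
    exact_mod_cast h2
  have hw2 : ∀ j, ∑ i, w i j = 1 := by
    intro i
    have := congrFun (congrFun hU' i) i
    rw [Matrix.mul_apply] at this
    simp only [Matrix.conjTranspose_apply, Matrix.one_apply_eq] at this
    have h2 : ((∑ j, w j i : ℝ) : ℂ) = 1 := by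
      rw [← this]; push_cast
      refine Finset.sum_congr rfl fun j _ => ?_
      rw [mul_comm]
      exact Complex.normSq_eq_conj_mul_self
    exact_mod_cast h2
  have hd : ∀ j, (ρ j j).re = ∑ i, p i * w i j := by
    intro j
    have h2 : ρ j j = ((∑ i, p i * w i j : ℝ) : ℂ) := by
      rw [h, Matrix.mul_apply]
      push_cast
      refine Finset.sum_congr rfl fun i _ => ?_
      rw [Matrix.mul_diagonal, Matrix.conjTranspose_apply]
      simp only [hw]
      rw [Complex.normSq_eq_conj_mul_self]
      simp only [Complex.star_def]
      ring
    rw [h2]; simp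
  have key : ∀ i j, w i j * Real.negMulLog (p i) ≤
      -(p i * w i j) * Real.log (q j) + w i j * q j - p i * w i j := by
    intro i j
    rcases (hq j).eq_or_lt with h0 | h0
    · have h1 := hq0 j h0.symm
      rw [hd] at h1
      have h2 := (Finset.sum_eq_zero_iff_of_nonneg (fun i _ => mul_nonneg (hp i) (hw0 i j))).1 h1 i
        (Finset.mem_univ i)
      rw [h2, ← h0]
      rcases mul_eq_zero.1 h2 with h3 | h3 <;> simp [h3]
    · have := mul_le_mul_of_nonneg_left (nml_le (hp i) h0) (hw0 i j)
      linarith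
  have e1 : vnEntropy ρ = ∑ i, ∑ j, w i j * Real.negMulLog (p i) := by
    rw [hS]; refine Finset.sum_congr rfl fun i _ => ?_
    rw [← Finset.sum_mul, hw1, one_mul]
  have e2 : ∑ i, ∑ j, (-(p i * w i j) * Real.log (q j) + w i j * q j - p i * w i j)
      = - ∑ j, (ρ j j).re * Real.log (q j) + ∑ j, q j - ∑ j, (ρ j j).re := by
    rw [Finset.sum_comm]
    simp only [Finset.sum_sub_distrib, Finset.sum_add_distrib, ← Finset.sum_mul, hw2, one_mul,
      Finset.sum_neg_distrib, ← hd, neg_mul]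
  have := Finset.sum_le_sum (s := Finset.univ) fun i _ =>
    Finset.sum_le_sum (s := Finset.univ) fun j _ => key i j
  rw [← e1, e2] at this
  linarith

lemma vn_unitary {ι : Type} [Fintype ι] [DecidableEq ι] {ρ W : Matrix ι ι ℂ} (hρ : ρ.IsHermitian)
    (hW : W * Wᴴ = 1) : vnEntropy (Wᴴ * ρ * W) = vnEntropy ρ := by
  apply vn_congr (isHermitian_conjTranspose_mul_mul W hρ) hρ 0 0
  rw [Matrix.charpoly_mul_comm, ← Matrix.mul_assoc, hW, Matrix.one_mul]

open Kronecker in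
lemma ptr_left {α β : Type} [Fintype α] [DecidableEq α] [Fintype β] [DecidableEq β]
    (ρ : Matrix (α × β) (α × β) ℂ) (X : Matrix α α ℂ) :
    (ρ * (X ⊗ₖ (1 : Matrix β β ℂ))).trace =
      ((Matrix.of fun a a' => ∑ b, ρ (a, b) (a', b)) * X).trace := by
  simp only [Matrix.trace, Matrix.diag, Matrix.mul_apply, Fintype.sum_prod_type,
    Matrix.kroneckerMap_apply, Matrix.one_apply, Matrix.of_apply]
  refine Finset.sum_congr rfl fun a _ => ?_
  rw [Finset.sum_comm]
  refine Finset.sum_congr rfl fun a' _ => ?_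
  simp [Finset.sum_mul]

open Kronecker in
lemma ptr_right {α β : Type} [Fintype α] [DecidableEq α] [Fintype β] [DecidableEq β]
    (ρ : Matrix (α × β) (α × β) ℂ) (X : Matrix β β ℂ) :
    (ρ * ((1 : Matrix α α ℂ) ⊗ₖ X)).trace =
      ((Matrix.of fun b b' => ∑ a, ρ (a, b) (a, b')) * X).trace := by
  simp only [Matrix.trace, Matrix.diag, Matrix.mul_apply, Fintype.sum_prod_type,
    Matrix.kroneckerMap_apply, Matrix.one_apply, Matrix.of_apply]
  simp only [ite_mul, one_mul, zero_mul, mul_ite, mul_zero]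
  rw [Finset.sum_comm]
  refine Finset.sum_congr rfl fun b _ => ?_
  simp only [Finset.sum_mul]
  rw [Finset.sum_comm]
  rw [Finset.sum_comm]
  conv_rhs => rw [Finset.sum_comm]
  refine Finset.sum_congr rfl fun a' _ => ?_
  rw [Finset.sum_comm]
  simp

open Kronecker in
lemma vn_subadd {α β : Type} [Fintype α] [DecidableEq α] [Fintype β] [DecidableEq β]
    {ρ : Matrix (α × β) (α × β) ℂ} (hρ : ρ.PosSemidef) (ht : ρ.trace = 1)
    (A : Matrix α α ℂ) (hA : ∀ a a', A a a' = ∑ b, ρ (a, b) (a', b)) (hAh : A.IsHermitian)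
    (B : Matrix β β ℂ) (hB : ∀ b b', B b b' = ∑ a, ρ (a, b) (a, b')) (hBh : B.IsHermitian) :
    vnEntropy ρ ≤ vnEntropy A + vnEntropy B := by
  obtain ⟨U, p, hU, hU', hUA, hSA⟩ := spec hAh
  obtain ⟨V, q, hV, hV', hVB, hSB⟩ := spec hBh
  set W := U ⊗ₖ V with hWdef
  have hWH : Wᴴ = Uᴴ ⊗ₖ Vᴴ := Matrix.conjTranspose_kronecker U V
  have hW : W * Wᴴ = 1 := by
    rw [hWH, hWdef, ← Matrix.mul_kronecker_mul, hU', hV', Matrix.one_kronecker_one]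
  have hW' : Wᴴ * W = 1 := by
    rw [hWH, hWdef, ← Matrix.mul_kronecker_mul, hU, hV, Matrix.one_kronecker_one]
  rw [← vn_unitary hρ.1 hW]
  have hρ' := hρ.conjTranspose_mul_mul_same W
  set ρ' := Wᴴ * ρ * W with hρdef
  have eA : A = Matrix.of fun a a' => ∑ b, ρ (a, b) (a', b) := by ext a a'; exact hA a a'
  have eB : B = Matrix.of fun b b' => ∑ a, ρ (a, b) (a, b') := by ext a a'; exact hB a a'
  have mA : ∀ a, ∑ b, ρ' (a, b) (a, b) = (p a : ℂ) := by
    intro a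
    have h1 := ptr_left ρ' (Matrix.single a a 1)
    rw [Matrix.trace_mul_single] at h1
    simp only [Matrix.of_apply, MulOpposite.op_one, one_smul] at h1
    rw [← h1, hρdef]
    have h2 : (Wᴴ * ρ * W * (Matrix.single a a 1 ⊗ₖ (1 : Matrix β β ℂ))).trace
        = (ρ * ((U * Matrix.single a a 1 * Uᴴ) ⊗ₖ (1 : Matrix β β ℂ))).trace := by
      have : (U * Matrix.single a a 1 * Uᴴ) ⊗ₖ (1 : Matrix β β ℂ) =
          W * (Matrix.single a a 1 ⊗ₖ (1 : Matrix β β ℂ)) * Wᴴ := by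
        rw [hWH, hWdef, ← Matrix.mul_kronecker_mul, ← Matrix.mul_kronecker_mul, Matrix.mul_one, hV']
      rw [this, Matrix.mul_assoc, Matrix.mul_assoc, Matrix.trace_mul_comm]
      simp only [Matrix.mul_assoc]
    rw [h2, ptr_left, ← eA, Matrix.mul_assoc, ← Matrix.mul_assoc, Matrix.trace_mul_comm,
      ← Matrix.mul_assoc]
    simp only [Matrix.mul_assoc]
    rw [← Matrix.mul_assoc Uᴴ, spec_diag hU hUA, Matrix.trace_mul_comm, Matrix.trace_mul_single]
    simp
  have mB : ∀ b, ∑ a, ρ' (a, b) (a, b) = (q b : ℂ) := by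
    intro b
    have h1 := ptr_right ρ' (Matrix.single b b 1)
    rw [Matrix.trace_mul_single] at h1
    simp only [Matrix.of_apply, MulOpposite.op_one, one_smul] at h1
    rw [← h1, hρdef]
    have h2 : (Wᴴ * ρ * W * ((1 : Matrix α α ℂ) ⊗ₖ Matrix.single b b 1)).trace
        = (ρ * ((1 : Matrix α α ℂ) ⊗ₖ (V * Matrix.single b b 1 * Vᴴ))).trace := by
      have : (1 : Matrix α α ℂ) ⊗ₖ (V * Matrix.single b b 1 * Vᴴ) =
          W * ((1 : Matrix α α ℂ) ⊗ₖ Matrix.single b b 1) * Wᴴ := by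
        rw [hWH, hWdef, ← Matrix.mul_kronecker_mul, ← Matrix.mul_kronecker_mul, Matrix.mul_one, hU']
      rw [this, Matrix.mul_assoc, Matrix.mul_assoc, Matrix.trace_mul_comm]
      simp only [Matrix.mul_assoc]
    rw [h2, ptr_right, ← eB, Matrix.mul_assoc, ← Matrix.mul_assoc, Matrix.trace_mul_comm,
      ← Matrix.mul_assoc]
    simp only [Matrix.mul_assoc]
    rw [← Matrix.mul_assoc Vᴴ, spec_diag hV hVB, Matrix.trace_mul_comm, Matrix.trace_mul_single]
    simp
  set d : α → β → ℝ := fun a b => (ρ' (a, b) (a, b)).re with hd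
  have d0 : ∀ a b, 0 ≤ d a b := fun a b => (Complex.le_def.1 (hρ'.diag_nonneg (i := (a, b)))).1
  have dA : ∀ a, ∑ b, d a b = p a := by
    intro a; have := congrArg Complex.re (mA a); simpa [hd] using this
  have dB : ∀ b, ∑ a, d a b = q b := by
    intro b; have := congrArg Complex.re (mB b); simpa [hd] using this
  have p0 : ∀ a, 0 ≤ p a := fun a => dA a ▸ Finset.sum_nonneg fun b _ => d0 a b
  have q0 : ∀ b, 0 ≤ q b := fun b => dB b ▸ Finset.sum_nonneg fun a _ => d0 a b
  have pz : ∀ a b, p a = 0 → d a b = 0 := by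
    intro a b h
    rw [← dA] at h
    exact (Finset.sum_eq_zero_iff_of_nonneg (fun b _ => d0 a b)).1 h b (Finset.mem_univ b)
  have qz : ∀ a b, q b = 0 → d a b = 0 := by
    intro a b h
    rw [← dB] at h
    exact (Finset.sum_eq_zero_iff_of_nonneg (fun a _ => d0 a b)).1 h a (Finset.mem_univ a)
  have trA : ∑ a, p a = 1 := by
    have h1 := spec_trace hU hUA
    have h2 : A.trace = ρ.trace := by
      simp [Matrix.trace, hA, Fintype.sum_prod_type]
    rw [h2, ht] at h1; exact_mod_cast h1.symm
  have trB : ∑ a, q a = 1 := by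
    simp only [← dB]; rw [Finset.sum_comm]; simp only [dA, trA]
  have := vn_klein hρ' (fun x => p x.1 * q x.2) (fun x => mul_nonneg (p0 _) (q0 _)) (by
    rintro ⟨a, b⟩ h
    rcases mul_eq_zero.1 h with h | h
    · exact pz a b h
    · exact qz a b h) (by
    rw [Fintype.sum_prod_type, Fintype.sum_prod_type]
    apply le_of_eq
    change _ = ∑ a, ∑ b, d a b
    simp only [dA, trA, ← Finset.mul_sum, trB, mul_one])
  refine this.trans (le_of_eq ?_)
  rw [hSA, hSB, Fintype.sum_prod_type]
  have e : ∀ a b, d a b * Real.log (p a * q b) = d a b * Real.log (p a) + d a b * Real.log (q b) := by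
    intro a b
    by_cases h1 : p a = 0
    · simp [pz a b h1]
    by_cases h2 : q b = 0
    · simp [qz a b h2]
    rw [Real.log_mul h1 h2]; ring
  change -∑ a, ∑ b, d a b * Real.log (p a * q b) = _
  simp only [e, Finset.sum_add_distrib]
  rw [Finset.sum_comm (f := fun a b => d a b * Real.log (q b))]
  simp only [← Finset.sum_mul, dA, dB, Real.negMulLog, neg_mul, Finset.sum_neg_distrib]
  ring

lemma pinch {β : Type} [Fintype β] [DecidableEq β]
    {ρ : Matrix (Fin 2 × β) (Fin 2 × β) ℂ} (hρ : ρ.PosSemidef)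
    (hB : ∀ b b', ∑ r, ρ (r, b) (r, b') = if b = b' then (4 : ℂ)⁻¹ else 0) :
    ((2 : ℂ)⁻¹ • (1 : Matrix (Fin 2 × β) (Fin 2 × β) ℂ) - ρ).PosSemidef := by
  set D : Matrix (Fin 2 × β) (Fin 2 × β) ℂ := diagonal (fun s => if s.1 = 0 then 1 else -1) with hD
  set fl : Fin 2 × β → Fin 2 × β := fun s => (1 - s.1, s.2)
  have h1 := hρ.mul_mul_conjTranspose_same D
  have h2 := hρ.submatrix fl
  have h3 := h2.mul_mul_conjTranspose_same D
  have := (h1.add h2).add h3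
  convert this using 1
  ext ⟨r, b⟩ ⟨r', b'⟩
  have hb := hB b b'
  rw [Fin.sum_univ_two] at hb
  fin_cases r <;> fin_cases r' <;>
    simp [hD, Matrix.diagonal_conjTranspose, Matrix.one_apply, fl] <;>
    (try split_ifs at * with hbb) <;> (try subst hbb) <;> (try simp at *) <;> linear_combination (-2) * hb

lemma ssa_special {α β γ δ : Type} [Fintype α] [DecidableEq α] [Fintype β] [DecidableEq β]
    [Fintype γ] [DecidableEq γ] [Fintype δ] [DecidableEq δ] (hα : Fintype.card α = 4)
    (f : α → β → γ → δ → ℂ)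
    (N0 : Matrix α α ℂ)
    (hN0 : ∀ a a', N0 a a' = ∑ b, ∑ c, ∑ d, f a b c d * star (f a' b c d))
    (h0 : N0 = (4 : ℂ)⁻¹ • 1)
    (N1 : Matrix (α × β) (γ × δ) ℂ) (hN1 : ∀ a b c d, N1 (a, b) (c, d) = f a b c d)
    (h1 : N1 * N1ᴴ * (N1 * N1ᴴ) = (2 : ℂ)⁻¹ • (N1 * N1ᴴ))
    (N2 : Matrix (α × γ) (β × δ) ℂ) (hN2 : ∀ a b c d, N2 (a, c) (b, d) = f a b c d)
    (h2 : N2 * N2ᴴ * (N2 * N2ᴴ) = (2 : ℂ)⁻¹ • (N2 * N2ᴴ))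
    (M : Matrix (α × β × γ) δ ℂ) (hM : ∀ a b c d, M (a, b, c) d = f a b c d)
    (ht : (M * Mᴴ).trace = 1) :
    vnEntropy (M * Mᴴ) ≤ 0 := by
  have aux : ∀ {ι κ : Type} [Fintype ι] [DecidableEq ι] [Fintype κ] [DecidableEq κ]
      (N : Matrix ι κ ℂ), N * Nᴴ * (N * Nᴴ) = (2 : ℂ)⁻¹ • (N * Nᴴ) → ((2 : ℂ) • (N * Nᴴ)) * N = N := by
    intro ι κ _ _ _ _ N h
    have : ((2 : ℂ) • (N * Nᴴ) - 1) * (N * Nᴴ) = 0 := by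
      rw [Matrix.sub_mul, Matrix.smul_mul, h]; simp
    rw [Matrix.mul_self_mul_conjTranspose_eq_zero] at this
    rw [Matrix.sub_mul, Matrix.one_mul, sub_eq_zero] at this
    exact this
  have k1 := aux N1 h1
  have k2 := aux N2 h2
  set P1 := (2 : ℂ) • (N1 * N1ᴴ) with hP1
  set P2 := (2 : ℂ) • (N2 * N2ᴴ) with hP2
  have i1 : P1 * P1 = P1 := by rw [hP1, Matrix.smul_mul, Matrix.mul_smul, h1]; simp
  have i2 : P2 * P2 = P2 := by rw [hP2, Matrix.smul_mul, Matrix.mul_smul, h2]; simp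
  have s1 : P1ᴴ = P1 := by rw [hP1]; simp
  have s2 : P2ᴴ = P2 := by rw [hP2]; simp
  set P : Matrix (α × β × γ) (α × β × γ) ℂ :=
    Matrix.of fun x y => if x.2.2 = y.2.2 then P1 (x.1, x.2.1) (y.1, y.2.1) else 0 with hP
  set Q : Matrix (α × β × γ) (α × β × γ) ℂ :=
    Matrix.of fun x y => if x.2.1 = y.2.1 then P2 (x.1, x.2.2) (y.1, y.2.2) else 0 with hQ
  have PP : P * P = P := by
    ext ⟨a, b, c⟩ ⟨a', b', c'⟩
    have := congrFun (congrFun i1 (a, b)) (a', b')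
    simp only [Matrix.mul_apply, Fintype.sum_prod_type] at this
    simp only [hP, Matrix.mul_apply, Fintype.sum_prod_type, Matrix.of_apply]
    by_cases hc : c = c'
    · subst hc
      simp [this]
    · simp [hc]
  have QQ : Q * Q = Q := by
    ext ⟨a, b, c⟩ ⟨a', b', c'⟩
    have := congrFun (congrFun i2 (a, c)) (a', c')
    simp only [Matrix.mul_apply, Fintype.sum_prod_type] at this
    simp only [hQ, Matrix.mul_apply, Fintype.sum_prod_type, Matrix.of_apply]
    by_cases hc : b = b'
    · subst hc
      rw [← this]
      simp only [if_true]
      refine Finset.sum_congr rfl fun x _ => ?_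
      rw [Finset.sum_comm]
      simp
    · simp only [if_neg hc]
      refine Finset.sum_eq_zero fun x _ => Finset.sum_eq_zero fun y _ => Finset.sum_eq_zero fun z _ => ?_
      by_cases h : b = y
      · subst h; simp [hc]
      · simp [h]
  have PH : Pᴴ = P := by
    ext ⟨a, b, c⟩ ⟨a', b', c'⟩
    have := congrFun (congrFun s1 (a, b)) (a', b')
    rw [Matrix.conjTranspose_apply] at this
    simp only [hP, Matrix.conjTranspose_apply, Matrix.of_apply]
    by_cases hc : c = c'
    · subst hc; simpa using this
    · simp [hc, Ne.symm hc]
  have QH : Qᴴ = Q := by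
    ext ⟨a, b, c⟩ ⟨a', b', c'⟩
    have := congrFun (congrFun s2 (a, c)) (a', c')
    rw [Matrix.conjTranspose_apply] at this
    simp only [hQ, Matrix.conjTranspose_apply, Matrix.of_apply]
    by_cases hc : b = b'
    · subst hc; simpa using this
    · simp [hc, Ne.symm hc]
  have PM : P * M = M := by
    ext ⟨a, b, c⟩ d
    have := congrFun (congrFun k1 (a, b)) (c, d)
    simp only [Matrix.mul_apply, Fintype.sum_prod_type, hN1] at this
    simp only [hP, Matrix.mul_apply, Fintype.sum_prod_type, Matrix.of_apply, hM]
    simp [this]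
  have QM : Q * M = M := by
    ext ⟨a, b, c⟩ d
    have := congrFun (congrFun k2 (a, c)) (b, d)
    simp only [Matrix.mul_apply, Fintype.sum_prod_type, hN2] at this
    simp only [hQ, Matrix.mul_apply, Fintype.sum_prod_type, Matrix.of_apply, hM]
    rw [← this]
    refine Finset.sum_congr rfl fun x _ => ?_
    rw [Finset.sum_comm]
    simp
  have m1 : ∀ a a', ∑ b, P1 (a, b) (a', b) = 2 * N0 a a' := by
    intro a a'
    simp [hP1, Matrix.mul_apply, Fintype.sum_prod_type, hN1, hN0, Finset.mul_sum]
  have m2 : ∀ a a', ∑ b, P2 (a, b) (a', b) = 2 * N0 a a' := by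
    intro a a'
    simp only [hP2, Matrix.smul_apply, Matrix.mul_apply, Fintype.sum_prod_type, hN2, hN0,
      smul_eq_mul, Matrix.conjTranspose_apply, ← Finset.mul_sum]
    rw [Finset.sum_comm]
  have tr : (Q * P).trace = 1 := by
    have e1 : (Q * P).trace = ∑ a, ∑ a', (∑ c, P2 (a, c) (a', c)) * (∑ b, P1 (a', b) (a, b)) := by
      simp only [hP, hQ, Matrix.trace, Matrix.diag, Matrix.mul_apply, Fintype.sum_prod_type,
        Matrix.of_apply, mul_ite, ite_mul, zero_mul, mul_zero]
      refine Finset.sum_congr rfl fun a _ => ?_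
      simp only [Finset.sum_mul_sum, Finset.sum_ite_eq, Finset.sum_ite_eq', Finset.mem_univ, if_true]
      conv_rhs => rw [Finset.sum_comm]
      conv_lhs => rw [Finset.sum_comm]
      refine Finset.sum_congr rfl fun c _ => ?_
      conv_rhs => rw [Finset.sum_comm]
    rw [e1]
    simp only [m1, m2, h0, Matrix.smul_apply, Matrix.one_apply, smul_eq_mul]
    simp [hα]
    norm_num
  apply vn_pure (T := (Q * P) * (Q * P)ᴴ) (posSemidef_self_mul_conjTranspose M) ht
    (posSemidef_self_mul_conjTranspose _)
  · rw [Matrix.conjTranspose_mul, PH, QH, Matrix.trace_mul_comm]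
    calc _ = (P * (Q * Q) * P).trace := by simp only [Matrix.mul_assoc]
      _ = _ := by rw [QQ, Matrix.trace_mul_comm, ← Matrix.mul_assoc, PP, Matrix.trace_mul_comm, tr]
  · rw [Matrix.conjTranspose_mul, PH, QH]
    calc _ = Q * (P * (P * (Q * M))) * Mᴴ := by simp only [Matrix.mul_assoc]
      _ = _ := by rw [QM, PM, PM, QM]

lemma bridge {m : ℕ} (ψ : (Fin m → Fin 2) → ℂ) (X : Finset (Fin m)) {α β : Type}
    [Fintype α] [Fintype β] (F : α × β ≃ (Fin m → Fin 2))
    (h1 : ∀ u w w', ∀ i ∈ X, F (u, w) i = F (u, w') i)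
    (h2 : ∀ u u' w, ∀ i ∉ X, F (u, w) i = F (u', w) i)
    (N : Matrix α β ℂ) (hN : ∀ u w, N u w = ψ (F (u, w))) :
    ∃ e : α ≃ ({x // x ∈ X} → Fin 2), (reducedDensity ψ X).submatrix e e = N * Nᴴ := by
  obtain ⟨u0, w0⟩ := F.symm (fun _ => 0)
  let e0 : α → ({x // x ∈ X} → Fin 2) := fun u i => F (u, w0) i
  let e1 : β → ({x // x ∈ Xᶜ} → Fin 2) := fun w i => F (u0, w) i
  have hg : ∀ u w, glue X (e0 u) (e1 w) = F (u, w) := by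
    intro u w
    ext i : 1
    unfold glue
    by_cases hi : i ∈ X
    · rw [dif_pos hi]; exact h1 u w0 w i hi
    · rw [dif_neg hi]; exact h2 u0 u w i hi
  have b0 : Function.Bijective e0 := by
    constructor
    · intro u u' h
      have : F (u, w0) = F (u', w0) := by rw [← hg, ← hg, h]
      simpa using this
    · intro s
      obtain ⟨⟨u, w⟩, h⟩ := F.surjective (glue X s (fun _ => 0))
      refine ⟨u, ?_⟩
      ext i : 1
      change F (u, w0) i = s i
      rw [h1 u w0 w i i.2, h]
      simp [glue]
  have b1 : Function.Bijective e1 := by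
    constructor
    · intro u u' h
      have : F (u0, u) = F (u0, u') := by rw [← hg, ← hg, h]
      simpa using this
    · intro s
      obtain ⟨⟨u, w⟩, h⟩ := F.surjective (glue X (fun _ => 0) s)
      refine ⟨w, ?_⟩
      ext i : 1
      change F (u0, w) i = s i
      have hi : (i : Fin m) ∉ X := Finset.mem_compl.1 i.2
      rw [h2 u0 u w i hi, h]
      simp [glue, hi]
  refine ⟨Equiv.ofBijective e0 b0, ?_⟩
  ext u v
  rw [Matrix.submatrix_apply, Matrix.mul_apply]
  unfold reducedDensity
  rw [← (Equiv.ofBijective e1 b1).sum_comp]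
  refine Finset.sum_congr rfl fun w _ => ?_
  simp only [Equiv.ofBijective_apply, hg, Matrix.conjTranspose_apply, hN]
  rfl

lemma rd_psd {m : ℕ} (ψ : (Fin m → Fin 2) → ℂ) (X : Finset (Fin m)) :
    (reducedDensity ψ X).PosSemidef := by
  have : reducedDensity ψ X = (Matrix.of fun u w => ψ (glue X u w)) *
      (Matrix.of fun u w => ψ (glue X u w))ᴴ := by
    ext u v
    rw [Matrix.mul_apply]
    rfl
  rw [this]
  exact posSemidef_self_mul_conjTranspose _

lemma bridge_S {m : ℕ} (ψ : (Fin m → Fin 2) → ℂ) (X : Finset (Fin m)) {α β : Type}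
    [Fintype α] [DecidableEq α] [Fintype β] (F : α × β ≃ (Fin m → Fin 2))
    (h1 : ∀ u w w', ∀ i ∈ X, F (u, w) i = F (u, w') i)
    (h2 : ∀ u u' w, ∀ i ∉ X, F (u, w) i = F (u', w) i)
    (N : Matrix α β ℂ) (hN : ∀ u w, N u w = ψ (F (u, w))) :
    Sent ψ X = vnEntropy (N * Nᴴ) := by
  obtain ⟨e, he⟩ := bridge ψ X F h1 h2 N hN
  rw [← he, vn_submatrix (rd_psd ψ X).1]
  rfl

lemma bridge_tr {m : ℕ} (ψ : (Fin m → Fin 2) → ℂ) (hψ : ∑ x, ‖ψ x‖ ^ 2 = 1) {α β : Type}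
    [Fintype α] [Fintype β] (F : α × β ≃ (Fin m → Fin 2))
    (N : Matrix α β ℂ) (hN : ∀ u w, N u w = ψ (F (u, w))) :
    (N * Nᴴ).trace = 1 := by
  have h2 : ((∑ x, ‖ψ x‖ ^ 2 : ℝ) : ℂ) = 1 := by rw [hψ]; simp
  rw [← h2, ← F.sum_comp, Fintype.sum_prod_type]
  push_cast
  simp only [Matrix.trace, Matrix.diag, Matrix.mul_apply, Matrix.conjTranspose_apply, hN]
  refine Finset.sum_congr rfl fun u _ => Finset.sum_congr rfl fun w _ => ?_
  exact Complex.mul_conj' _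

/-- splitting the qubits into a block, and the rest -/
def eq2 {m : ℕ} (X : Finset (Fin m)) :
    ({x // x ∈ X} → Fin 2) × ({x // x ∉ X} → Fin 2) ≃ (Fin m → Fin 2) where
  toFun p i := if h : i ∈ X then p.1 ⟨i, h⟩ else p.2 ⟨i, h⟩
  invFun g := (fun i => g i, fun i => g i)
  left_inv p := by
    ext i : 2
    · simp
    · have := i.2; simp [this]
  right_inv g := by
    ext i : 1
    by_cases h : i ∈ X <;> simp [h]

/-- splitting the qubits into two blocks and the rest -/
def eq3 {m : ℕ} (X Y : Finset (Fin m)) (hXY : Disjoint X Y) :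
    ({x // x ∈ X} → Fin 2) × ({x // x ∈ Y} → Fin 2) × ({x // x ∉ X ∧ x ∉ Y} → Fin 2)
      ≃ (Fin m → Fin 2) where
  toFun p i := if h : i ∈ X then p.1 ⟨i, h⟩ else if h' : i ∈ Y then p.2.1 ⟨i, h'⟩ else
    p.2.2 ⟨i, h, h'⟩
  invFun g := (fun i => g i, fun i => g i, fun i => g i)
  left_inv p := by
    obtain ⟨x, y, w⟩ := p
    refine Prod.ext ?_ (Prod.ext ?_ ?_)
    · ext i : 1; simp
    · ext i : 1
      have := Finset.disjoint_right.1 hXY i.2; simp [this]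
    · ext i : 1
      have := i.2; simp [this]
  right_inv g := by
    ext i : 1
    by_cases h : i ∈ X <;> by_cases h' : i ∈ Y <;> simp [h, h']

/-- splitting the qubits into three blocks and the rest -/
def eq4 {m : ℕ} (Z X Y : Finset (Fin m)) (hZX : Disjoint Z X) (hZY : Disjoint Z Y)
    (hXY : Disjoint X Y) :
    ({x // x ∈ Z} → Fin 2) × ({x // x ∈ X} → Fin 2) × ({x // x ∈ Y} → Fin 2) ×
      ({x // x ∉ Z ∧ x ∉ X ∧ x ∉ Y} → Fin 2) ≃ (Fin m → Fin 2) where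
  toFun p i := if h'' : i ∈ Z then p.1 ⟨i, h''⟩ else if h : i ∈ X then p.2.1 ⟨i, h⟩ else
    if h' : i ∈ Y then p.2.2.1 ⟨i, h'⟩ else p.2.2.2 ⟨i, h'', h, h'⟩
  invFun g := (fun i => g i, fun i => g i, fun i => g i, fun i => g i)
  left_inv p := by
    obtain ⟨z, x, y, w⟩ := p
    refine Prod.ext ?_ (Prod.ext ?_ (Prod.ext ?_ ?_))
    · ext i : 1; simp
    · ext i : 1
      have := Finset.disjoint_right.1 hZX i.2; simp [this]
    · ext i : 1
      have := Finset.disjoint_right.1 hXY i.2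
      have h := Finset.disjoint_right.1 hZY i.2; simp [this, h]
    · ext i : 1
      have := i.2; simp [this]
  right_inv g := by
    ext i : 1
    by_cases h : i ∈ X <;> by_cases h' : i ∈ Y <;> by_cases h'' : i ∈ Z <;> simp [h, h', h'']

lemma Sent_compl {m : ℕ} (ψ : (Fin m → Fin 2) → ℂ) (X : Finset (Fin m)) :
    Sent ψ Xᶜ = Sent ψ X := by
  rw [bridge_S ψ X (eq2 X) ?_ ?_ (Matrix.of fun u w => ψ (eq2 X (u, w))) (fun _ _ => rfl),
    bridge_S ψ Xᶜ ((Equiv.prodComm _ _).trans (eq2 X)) ?_ ?_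
      (Matrix.of fun u w => ψ (eq2 X (u, w)))ᵀ (fun _ _ => rfl), ← vn_swap]
  all_goals
    intro _ _ _ i hi
    try simp at hi
    simp [eq2, hi]

lemma rd_trace {m : ℕ} (ψ : (Fin m → Fin 2) → ℂ) (hψ : ∑ x, ‖ψ x‖ ^ 2 = 1) (X : Finset (Fin m)) :
    (reducedDensity ψ X).trace = 1 := by
  obtain ⟨e, he⟩ := bridge ψ X (eq2 X) (by intro _ _ _ i hi; simp [eq2, hi])
    (by intro _ _ _ i hi; simp [eq2, hi]) (Matrix.of fun u w => ψ (eq2 X (u, w))) (fun _ _ => rfl)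
  rw [← bridge_tr ψ hψ (eq2 X) (Matrix.of fun u w => ψ (eq2 X (u, w))) (fun _ _ => rfl), ← he]
  simp only [Matrix.trace, Matrix.diag, Matrix.submatrix_apply]
  exact (e.sum_comp (fun i => reducedDensity ψ X i i)).symm

lemma Sent_le {m : ℕ} (ψ : (Fin m → Fin 2) → ℂ) (hψ : ∑ x, ‖ψ x‖ ^ 2 = 1) (X : Finset (Fin m)) :
    Sent ψ X ≤ X.card * Real.log 2 ∧ (Sent ψ X = X.card * Real.log 2 →
      reducedDensity ψ X = ((2 : ℂ) ^ X.card)⁻¹ • 1) := by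
  have := vn_le_log (rd_psd ψ X) (rd_trace ψ hψ X)
  simpa [Sent] using this

lemma Sent_subadd {m : ℕ} (ψ : (Fin m → Fin 2) → ℂ) (hψ : ∑ x, ‖ψ x‖ ^ 2 = 1)
    (X Y : Finset (Fin m)) (hXY : Disjoint X Y) : Sent ψ (X ∪ Y) ≤ Sent ψ X + Sent ψ Y := by
  let F := eq3 X Y hXY
  let N : Matrix (({x // x ∈ X} → Fin 2) × ({x // x ∈ Y} → Fin 2))
    ({x // x ∉ X ∧ x ∉ Y} → Fin 2) ℂ := Matrix.of fun u w => ψ (F (u.1, u.2, w))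
  let NX : Matrix ({x // x ∈ X} → Fin 2) (({x // x ∈ Y} → Fin 2) ×
    ({x // x ∉ X ∧ x ∉ Y} → Fin 2)) ℂ := Matrix.of fun u w => ψ (F (u, w.1, w.2))
  let NY : Matrix ({x // x ∈ Y} → Fin 2) (({x // x ∈ X} → Fin 2) ×
    ({x // x ∉ X ∧ x ∉ Y} → Fin 2)) ℂ := Matrix.of fun u w => ψ (F (w.1, u, w.2))
  let F1 : (({x // x ∈ X} → Fin 2) × ({x // x ∈ Y} → Fin 2)) × ({x // x ∉ X ∧ x ∉ Y} → Fin 2)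
      ≃ (Fin m → Fin 2) := (Equiv.prodAssoc _ _ _).trans F
  let F2 : ({x // x ∈ Y} → Fin 2) × (({x // x ∈ X} → Fin 2) × ({x // x ∉ X ∧ x ∉ Y} → Fin 2))
      ≃ (Fin m → Fin 2) := Equiv.trans
        ⟨fun p => (p.2.1, p.1, p.2.2), fun p => (p.2.1, p.1, p.2.2), fun _ => rfl, fun _ => rfl⟩ F
  have hS1 : Sent ψ (X ∪ Y) = vnEntropy (N * Nᴴ) := bridge_S ψ (X ∪ Y) F1 (by
    intro u w w' i hi
    by_cases h : i ∈ X
    · simp [F1, F, eq3, h]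
    · have h' : i ∈ Y := by simpa [h] using hi
      simp [F1, F, eq3, h, h']) (by
    intro u w w' i hi
    have h : i ∉ X ∧ i ∉ Y := by simpa using hi
    simp [F1, F, eq3, h]) N (fun _ _ => rfl)
  have hS2 : Sent ψ X = vnEntropy (NX * NXᴴ) := bridge_S ψ X F (by
    intro u w w' i hi
    simp [F, eq3, hi]) (by
    intro u w w' i hi
    simp [F, eq3, hi]) NX (fun _ _ => rfl)
  have hS3 : Sent ψ Y = vnEntropy (NY * NYᴴ) := bridge_S ψ Y F2 (by
    intro u w w' i hi
    have h := Finset.disjoint_right.1 hXY hi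
    simp [F2, F, eq3, hi, h]) (by
    intro u w w' i hi
    simp [F2, F, eq3, hi]) NY (fun _ _ => rfl)
  rw [hS1, hS2, hS3]
  apply vn_subadd (posSemidef_self_mul_conjTranspose N) (bridge_tr ψ hψ F1 N (fun _ _ => rfl)) _ _
      (isHermitian_mul_conjTranspose_self NX) _ _ (isHermitian_mul_conjTranspose_self NY)
  · intro a a'
    simp [Matrix.mul_apply, Fintype.sum_prod_type, N, NX]
  · intro a a'
    simp [Matrix.mul_apply, Fintype.sum_prod_type, N, NY]

lemma flat_of {m : ℕ} (ψ : (Fin m → Fin 2) → ℂ) (hψ : ∑ x, ‖ψ x‖ ^ 2 = 1)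
    (k : Fin m) (Y : Finset (Fin m)) (hk : k ∉ Y)
    (hY : reducedDensity ψ Y = (4 : ℂ)⁻¹ • 1) (hS : Sent ψ (insert k Y) = Real.log 2) :
    reducedDensity ψ (insert k Y) * reducedDensity ψ (insert k Y) =
      (2 : ℂ)⁻¹ • reducedDensity ψ (insert k Y) := by
  have hXY : Disjoint {k} Y := by simpa using hk
  let g : Fin 2 ≃ ({x // x ∈ ({k} : Finset (Fin m))} → Fin 2) :=
    ⟨fun r _ => r, fun f => f ⟨k, by simp⟩, fun _ => rfl, by
      intro f; ext ⟨x, hx⟩ : 1; have := Finset.mem_singleton.1 hx; subst this; rfl⟩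
  let F : Fin 2 × ({x // x ∈ Y} → Fin 2) × ({x // x ∉ ({k} : Finset (Fin m)) ∧ x ∉ Y} → Fin 2)
      ≃ (Fin m → Fin 2) := (Equiv.prodCongr g (Equiv.refl _)).trans (eq3 {k} Y hXY)
  let F1 := (Equiv.prodAssoc _ _ _).trans F
  let F2 : ({x // x ∈ Y} → Fin 2) × (Fin 2 × ({x // x ∉ ({k} : Finset (Fin m)) ∧ x ∉ Y} → Fin 2))
      ≃ (Fin m → Fin 2) := Equiv.trans
        ⟨fun p => (p.2.1, p.1, p.2.2), fun p => (p.2.1, p.1, p.2.2), fun _ => rfl, fun _ => rfl⟩ F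
  let N : Matrix (Fin 2 × ({x // x ∈ Y} → Fin 2)) 
    ({x // x ∉ ({k} : Finset (Fin m)) ∧ x ∉ Y} → Fin 2) ℂ := Matrix.of fun u w => ψ (F (u.1, u.2, w))
  let NY : Matrix ({x // x ∈ Y} → Fin 2) (Fin 2 ×
    ({x // x ∉ ({k} : Finset (Fin m)) ∧ x ∉ Y} → Fin 2)) ℂ := Matrix.of fun u w => ψ (F (w.1, u, w.2))
  obtain ⟨e1, he1⟩ := bridge ψ (insert k Y) F1 (by
    intro u w w' i hi
    by_cases h : i = k <;> by_cases h' : i ∈ Y <;> simp_all [F1, F, eq3]) (by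
    intro u w w' i hi
    by_cases h : i = k <;> by_cases h' : i ∈ Y <;> simp_all [F1, F, eq3]) N (fun _ _ => rfl)
  obtain ⟨e2, he2⟩ := bridge ψ Y F2 (by
    intro u w w' i hi
    have h := Finset.disjoint_right.1 hXY hi
    simp_all [F2, F, eq3]) (by
    intro u w w' i hi
    by_cases h : i = k <;> simp_all [F2, F, eq3]) NY (fun _ _ => rfl)
  have hNf : N * Nᴴ * (N * Nᴴ) = (2 : ℂ)⁻¹ • (N * Nᴴ) := by
    apply vn_flat (posSemidef_self_mul_conjTranspose N) (bridge_tr ψ hψ F1 N (fun _ _ => rfl))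
    · apply pinch (posSemidef_self_mul_conjTranspose N)
      intro b b'
      have h := congrFun (congrFun he2 b) b'
      rw [hY] at h
      simp only [Matrix.submatrix_apply, Matrix.smul_apply, Matrix.one_apply, e2.injective.eq_iff,
        smul_eq_mul, mul_ite, mul_one, mul_zero] at h
      rw [h]
      simp [Matrix.mul_apply, Fintype.sum_prod_type, N, NY]
    · rw [← he1, vn_submatrix (rd_psd ψ _).1]
      exact hS
  rw [← he1, Matrix.submatrix_mul_equiv] at hNf
  ext u v
  have := congrFun (congrFun hNf (e1.symm u)) (e1.symm v)
  simpa using this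

set_option maxHeartbeats 1000000 in
lemma Sent_ssa {m : ℕ} (ψ : (Fin m → Fin 2) → ℂ) (hψ : ∑ x, ‖ψ x‖ ^ 2 = 1)
    (Z X Y : Finset (Fin m)) (hZX : Disjoint Z X) (hZY : Disjoint Z Y) (hXY : Disjoint X Y)
    (hZ : Z.card = 2) (h0 : reducedDensity ψ Z = (4 : ℂ)⁻¹ • 1)
    (h1 : reducedDensity ψ (Z ∪ X) * reducedDensity ψ (Z ∪ X) =
      (2 : ℂ)⁻¹ • reducedDensity ψ (Z ∪ X))
    (h2 : reducedDensity ψ (Z ∪ Y) * reducedDensity ψ (Z ∪ Y) =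
      (2 : ℂ)⁻¹ • reducedDensity ψ (Z ∪ Y)) :
    Sent ψ (Z ∪ X ∪ Y) ≤ 0 := by
  let α := {x // x ∈ Z} → Fin 2
  let β := {x // x ∈ X} → Fin 2
  let γ := {x // x ∈ Y} → Fin 2
  let δ := {x // x ∉ Z ∧ x ∉ X ∧ x ∉ Y} → Fin 2
  let F : α × β × γ × δ ≃ (Fin m → Fin 2) := eq4 Z X Y hZX hZY hXY
  let F1 : (α × β) × (γ × δ) ≃ (Fin m → Fin 2) := (Equiv.prodAssoc _ _ _).trans F
  let F2 : (α × γ) × (β × δ) ≃ (Fin m → Fin 2) := Equiv.trans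
    ⟨fun p => (p.1.1, p.2.1, p.1.2, p.2.2), fun p => ((p.1, p.2.2.1), p.2.1, p.2.2.2),
      fun _ => rfl, fun _ => rfl⟩ F
  let F3 : (α × β × γ) × δ ≃ (Fin m → Fin 2) := Equiv.trans
    ⟨fun p => (p.1.1, p.1.2.1, p.1.2.2, p.2), fun p => ((p.1, p.2.1, p.2.2.1), p.2.2.2),
      fun _ => rfl, fun _ => rfl⟩ F
  let f : α → β → γ → δ → ℂ := fun a b c d => ψ (F (a, b, c, d))
  let N0 : Matrix α (β × γ × δ) ℂ := Matrix.of fun a w => f a w.1 w.2.1 w.2.2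
  let N1 : Matrix (α × β) (γ × δ) ℂ := Matrix.of fun u w => f u.1 u.2 w.1 w.2
  let N2 : Matrix (α × γ) (β × δ) ℂ := Matrix.of fun u w => f u.1 w.1 u.2 w.2
  let M : Matrix (α × β × γ) δ ℂ := Matrix.of fun u w => f u.1 u.2.1 u.2.2 w
  have dZX : ∀ i ∈ X, i ∉ Z := fun i hi => Finset.disjoint_right.1 hZX hi
  have dZY : ∀ i ∈ Y, i ∉ Z := fun i hi => Finset.disjoint_right.1 hZY hi
  have dXY : ∀ i ∈ Y, i ∉ X := fun i hi => Finset.disjoint_right.1 hXY hi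
  obtain ⟨e0, he0⟩ := bridge ψ Z F (by
    intro u w w' i hi; simp [F, eq4, hi]) (by
    intro u w w' i hi; simp [F, eq4, hi]) N0 (fun _ _ => rfl)
  obtain ⟨e1, he1⟩ := bridge ψ (Z ∪ X) F1 (by
    intro u w w' i hi
    by_cases h : i ∈ Z
    · simp [F1, F, eq4, h]
    · have h' : i ∈ X := by simpa [h] using hi
      simp [F1, F, eq4, h, h']) (by
    intro u w w' i hi
    have h : i ∉ Z ∧ i ∉ X := by simpa using hi
    simp [F1, F, eq4, h]) N1 (fun _ _ => rfl)
  obtain ⟨e2, he2⟩ := bridge ψ (Z ∪ Y) F2 (by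
    intro u w w' i hi
    by_cases h : i ∈ Z
    · simp [F2, F, eq4, h]
    · have h' : i ∈ Y := by simpa [h] using hi
      simp [F2, F, eq4, h, h', dXY i h']) (by
    intro u w w' i hi
    have h : i ∉ Z ∧ i ∉ Y := by simpa using hi
    simp [F2, F, eq4, h]) N2 (fun _ _ => rfl)
  have fl : ∀ {κ ι : Type} [Fintype κ] [Fintype ι] [DecidableEq κ] [DecidableEq ι]
      (ρ : Matrix ι ι ℂ) (σ : Matrix κ κ ℂ) (e : κ ≃ ι), ρ.submatrix e e = σ →
      ρ * ρ = (2 : ℂ)⁻¹ • ρ → σ * σ = (2 : ℂ)⁻¹ • σ := by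
    intro κ ι _ _ _ _ ρ σ e h h'
    rw [← h, Matrix.submatrix_mul_equiv, h']
    rfl
  have hSM : Sent ψ (Z ∪ X ∪ Y) = vnEntropy (M * Mᴴ) := bridge_S ψ (Z ∪ X ∪ Y) F3 (by
    intro u w w' i hi
    by_cases h : i ∈ Z
    · simp [F3, F, eq4, h]
    · by_cases h' : i ∈ X
      · simp [F3, F, eq4, h, h']
      · have h'' : i ∈ Y := by simpa [h, h'] using hi
        simp [F3, F, eq4, h, h', h'']) (by
    intro u w w' i hi
    have h : i ∉ Z ∧ i ∉ X ∧ i ∉ Y := by simpa [and_assoc] using hi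
    simp [F3, F, eq4, h]) M (fun _ _ => rfl)
  rw [hSM]
  apply ssa_special (by simp [α, hZ]) f (N0 * N0ᴴ) ?_ ?_ N1 (fun _ _ _ _ => rfl)
      (fl _ _ e1 he1 h1) N2 (fun _ _ _ _ => rfl) (fl _ _ e2 he2 h2) M (fun _ _ _ _ => rfl)
      (bridge_tr ψ hψ F3 M (fun _ _ => rfl))
  · intro a a'
    simp [Matrix.mul_apply, Fintype.sum_prod_type, N0]
  · rw [← he0, h0]
    ext a a'
    simp [Matrix.one_apply]

lemma posOf_compl {n : ℕ} (X : Finset (Fin n)) : (insert 0 (posOf X))ᶜ = posOf Xᶜ := by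
  ext i
  refine Fin.cases ?_ (fun j => ?_) i
  · simp [posOf]
  · simp [posOf]

lemma zero_notMem_posOf {n : ℕ} (X : Finset (Fin n)) : (0 : Fin (n + 1)) ∉ posOf X := by
  intro h
  obtain ⟨j, _, hj⟩ := Finset.mem_image.1 h
  exact Fin.succ_ne_zero j hj

lemma core {n : ℕ} (Γ : Finset (Fin n) → Prop) (ψ : (Fin (n + 1) → Fin 2) → ℂ)
    (hψ : IsPureQSSState Γ ψ) (a b c : Fin n) (hab : a ≠ b) (hac : a ≠ c) (hbc : b ≠ c)
    (gab : Γ {a, b}) (gac : Γ {a, c}) (nab : ¬ Γ {a, b}ᶜ) (nac : ¬ Γ {a, c}ᶜ)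
    (na : ¬ Γ {a}) (nb : ¬ Γ {b}) (nc : ¬ Γ {c}) (nbc : ¬ Γ {b, c}) : False := by
  have hn := hψ.normalized
  obtain ⟨D, hD⟩ : ∃ D : Finset (Fin n), D = {a, b, c}ᶜ := ⟨_, rfl⟩
  have hDa : a ∉ D := by simp [hD]
  have hDb : b ∉ D := by simp [hD]
  have hDc : c ∉ D := by simp [hD]
  have c1 : ({a, b} : Finset (Fin n))ᶜ = {c} ∪ D := by
    ext i; simp only [hD, mem_compl, mem_union, mem_insert, mem_singleton]; grind
  have c2 : ({a, c} : Finset (Fin n))ᶜ = {b} ∪ D := by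
    ext i; simp only [hD, mem_compl, mem_union, mem_insert, mem_singleton]; grind
  have c3 : ({b, c} : Finset (Fin n))ᶜ = {a} ∪ D := by
    ext i; simp only [hD, mem_compl, mem_union, mem_insert, mem_singleton]; grind
  have c4 : ({a} : Finset (Fin n))ᶜ = {b} ∪ ({c} ∪ D) := by
    ext i; simp only [hD, mem_compl, mem_union, mem_insert, mem_singleton]; grind
  have c5 : ({b} : Finset (Fin n))ᶜ = {a} ∪ ({c} ∪ D) := by
    ext i; simp only [hD, mem_compl, mem_union, mem_insert, mem_singleton]; grind
  have c6 : ({c} : Finset (Fin n))ᶜ = {a} ∪ ({b} ∪ D) := by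
    ext i; simp only [hD, mem_compl, mem_union, mem_insert, mem_singleton]; grind
  have c7 : ({b} ∪ ({c} ∪ D) : Finset (Fin n)) = {c} ∪ ({b} ∪ D) := by
    ext i; simp only [mem_union, mem_singleton]; tauto
  have c8 : ({b} ∪ ({c} ∪ D) : Finset (Fin n)) = {b, c} ∪ D := by
    ext i; simp only [mem_union, mem_insert, mem_singleton]; tauto
  obtain ⟨p, hp⟩ : ∃ p : Finset (Fin n) → ℝ, ∀ X, p X = Sent ψ (posOf X) := ⟨_, fun _ => rfl⟩
  have hR : ∀ X, Sent ψ (insert 0 (posOf X)) = p Xᶜ := by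
    intro X; rw [hp, ← posOf_compl, Sent_compl]
  have sub : ∀ X Y, Disjoint X Y → p (X ∪ Y) ≤ p X + p Y := by
    intro X Y h
    rw [hp, hp, hp]
    have := Sent_subadd ψ hn (posOf X) (posOf Y) (by
      unfold posOf
      exact (Finset.disjoint_image (Fin.succ_injective n)).2 h)
    rwa [posOf, posOf, ← Finset.image_union] at this
  have cardp : ∀ X : Finset (Fin n), (posOf X).card = X.card := fun X =>
    Finset.card_image_of_injective X (Fin.succ_injective n)
  have le1 : ∀ x : Fin n, p {x} ≤ Real.log 2 := by
    intro x
    have := (Sent_le ψ hn (posOf {x})).1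
    rw [cardp] at this
    rw [hp]; simpa using this
  obtain ⟨s, hs⟩ : ∃ s, s = Sent ψ {0} := ⟨_, rfl⟩
  obtain ⟨L, hL⟩ : ∃ L, L = Real.log 2 := ⟨_, rfl⟩
  have Lpos : 0 < L := by rw [hL]; exact Real.log_pos (by norm_num)
  have hrec : ∀ X, Γ X → s + p X - p Xᶜ = 2 * L := by
    intro X hX; rw [hs, hL, ← hR, hp]; exact hψ.recover X hX
  have sec : ∀ X, ¬ Γ X → s + p X - p Xᶜ = 0 := by
    intro X hX; rw [hs, ← hR, hp]; exact hψ.secrecy X hX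
  have r1 := hrec _ gab
  have r2 := hrec _ gac
  have s1 := sec _ nab
  have s2 := sec _ nac
  rw [compl_compl] at s1 s2
  have s3 := sec _ na
  have s4 := sec _ nb
  have s5 := sec _ nc
  have s6 := sec _ nbc
  rw [c1] at r1 s1
  rw [c2] at r2 s2
  rw [c4] at s3
  rw [c5] at s4
  rw [c6] at s5
  rw [c3] at s6
  have t1 := sub {a} ({c} ∪ D) (by simp [hac, hDa])
  have t2 := sub {b} ({c} ∪ D) (by simp [hbc, hDb])
  have t3 := sub {a} ({b} ∪ D) (by simp [hab, hDa])
  have t4 := sub {c} ({b} ∪ D) (by simp [hbc.symm, hDc])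
  rw [← c7] at t4
  have t5 := sub {a} {b} (by simp [hab])
  have t6 := sub {a} {c} (by simp [hac])
  have t7 := sub {a} D (by simp [hDa])
  have t8 := sub {b, c} D (by simp [hDb, hDc])
  rw [← c8] at t8
  have e1 : ({a} ∪ {b} : Finset (Fin n)) = {a, b} := rfl
  have e2 : ({a} ∪ {c} : Finset (Fin n)) = {a, c} := rfl
  rw [e1] at t5
  rw [e2] at t6
  have la := le1 a
  have lb := le1 b
  have lc := le1 c
  rw [← hL] at la lb lc
  have hsL : s = L := by linarith
  have pa : p {a} = L := by linarith
  have pab : p {a, b} = 2 * L := by linarith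
  have pac : p {a, c} = 2 * L := by linarith
  have pbcD : p ({b} ∪ ({c} ∪ D)) = 2 * L := by linarith
  have pcD : p ({c} ∪ D) = L := by linarith
  have pbD : p ({b} ∪ D) = L := by linarith
  have mm : ∀ X : Finset (Fin (n + 1)), X.card = 2 → Sent ψ X = 2 * L →
      reducedDensity ψ X = (4 : ℂ)⁻¹ • 1 := by
    intro X h1 h2
    have := (Sent_le ψ hn X).2 (by rw [h1, h2, hL]; norm_num)
    rw [this, h1]; norm_num
  have cab : ({a, b} : Finset (Fin n)).card = 2 := Finset.card_pair hab
  have cac : ({a, c} : Finset (Fin n)).card = 2 := Finset.card_pair hac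
  have f1 := flat_of ψ hn 0 (posOf {a, b}) (zero_notMem_posOf _)
    (mm _ (by rw [cardp, cab]) (by rw [← hp, pab])) (by rw [hR, c1, pcD, hL])
  have f2 := flat_of ψ hn 0 (posOf {a, c}) (zero_notMem_posOf _)
    (mm _ (by rw [cardp, cac]) (by rw [← hp, pac])) (by rw [hR, c2, pbD, hL])
  have z0 := mm (insert 0 (posOf {a})) (by
    rw [Finset.card_insert_of_notMem (zero_notMem_posOf _), cardp]; simp) (by rw [hR, c4, pbcD])
  have u1 : insert 0 (posOf {a, b}) = insert 0 (posOf {a}) ∪ {b.succ} := by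
    ext i; simp [posOf]
  have u2 : insert 0 (posOf {a, c}) = insert 0 (posOf {a}) ∪ {c.succ} := by
    ext i; simp [posOf]
  have u3 : insert 0 (posOf {a, b, c}) = insert 0 (posOf {a}) ∪ {b.succ} ∪ {c.succ} := by
    ext i; simp [posOf]
  rw [u1] at f1
  rw [u2] at f2
  have fin := Sent_ssa ψ hn (insert 0 (posOf {a})) {b.succ} {c.succ}
    (by simp [posOf, hab.symm]) (by simp [posOf, hac.symm])
    (by simp [hbc]) (by
      rw [Finset.card_insert_of_notMem (zero_notMem_posOf _), cardp]; simp) z0 f1 f2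
  rw [← u3, hR, ← hD] at fin
  linarith

lemma comb (Γ : Finset (Fin 6) → Prop)
    (hmono : Monotonic Γ) (hnc : NoCloning Γ) (hnr : NoRedundancy Γ) (a b c : Fin 6)
    (gab : IsMinimal Γ {a, b}) (gac : IsMinimal Γ {a, c}) (hab : a ≠ b) (hac : a ≠ c) :
    ¬ Γ {b, c} := by
  have key : ∀ X : Finset (Fin 6), Γ X → b ∉ X → c ∉ X → ¬ Γ {b, c} := by
    intro X hX hb hc h
    refine (hnc X).1 hX (hmono _ _ h ?_)
    intro i hi
    simp only [mem_insert, mem_singleton] at hi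
    rcases hi with rfl | rfl <;> simpa
  have inter : ∀ X Y : Finset (Fin 6), Γ X → Γ Y → ∃ i, i ∈ X ∧ i ∈ Y := by
    intro X Y hX hY
    by_contra! h
    exact (hnc X).1 hX (hmono _ _ hY fun i hi => mem_compl.2 fun h' => h i h' hi)
  obtain ⟨d, hd⟩ : ∃ d, d ∉ ({a, b, c} : Finset (Fin 6)) := by
    by_contra! h
    have h1 : (univ : Finset (Fin 6)) ⊆ {a, b, c} := fun i _ => h i
    have h2 := card_le_card h1
    have h3 := Finset.card_le_three (a := a) (b := b) (c := c)
    simp at h2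
    omega
  simp only [mem_insert, mem_singleton, not_or] at hd
  obtain ⟨hda, hdb, hdc⟩ := hd
  obtain ⟨M, ⟨hM, hmin⟩, hdM⟩ := hnr d
  by_cases ha : a ∈ M
  · have aux : ∀ x, x ≠ d → Γ {a, x} → x ∉ M := by
      intro x hx hg hxM
      refine hmin {a, x} ?_ hg
      refine Finset.ssubset_iff_subset_ne.2 ⟨?_, ?_⟩
      · intro i hi
        simp only [mem_insert, mem_singleton] at hi
        rcases hi with rfl | rfl <;> assumption
      · rintro rfl
        simp only [mem_insert, mem_singleton] at hdM
        rcases hdM with h | h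
        · exact hda h
        · exact hx h.symm
    exact key M hM (aux b (Ne.symm hdb) gab.1) (aux c (Ne.symm hdc) gac.1)
  · have aux : ∀ x, Γ {a, x} → x ∈ M := by
      intro x hg
      obtain ⟨i, hi, hi'⟩ := inter _ _ hg hM
      simp only [mem_insert, mem_singleton] at hi
      rcases hi with rfl | rfl
      · exact absurd hi' ha
      · exact hi'
    have hb := aux b gab.1
    have hc := aux c gac.1
    have h1 : ¬ Γ (M.erase d) := hmin _ (Finset.erase_ssubset hdM)
    have h2 : Γ (M.erase d)ᶜ := by
      rw [hnc, compl_compl]; exact h1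
    exact key _ h2 (by simp [hb, Ne.symm hdb]) (by simp [hc, Ne.symm hdc])

lemma main3 (Γ : Finset (Fin 6) → Prop)
    (hmono : Monotonic Γ) (hnc : NoCloning Γ) (hnr : NoRedundancy Γ)
    (ψ : (Fin (6 + 1) → Fin 2) → ℂ) (hψ : IsPureQSSState Γ ψ) (a b c : Fin 6)
    (gab : IsMinimal Γ {a, b}) (gac : IsMinimal Γ {a, c}) (hab : a ≠ b) (hac : a ≠ c)
    (hbc : b ≠ c) : False := by
  have sl : ∀ x y : Fin 6, x ≠ y → ({x} : Finset (Fin 6)) ⊂ {x, y} := by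
    intro x y h
    rw [Finset.ssubset_iff_subset_ne]
    refine ⟨by simp, fun h' => ?_⟩
    have : y ∈ ({x} : Finset (Fin 6)) := by rw [h']; simp
    exact h (Finset.mem_singleton.1 this).symm
  have nb : ¬ Γ {b} := gab.2 _ (by rw [Finset.pair_comm]; exact sl b a hab.symm)
  have nc : ¬ Γ {c} := gac.2 _ (by rw [Finset.pair_comm]; exact sl c a hac.symm)
  exact core Γ ψ hψ a b c hab hac hbc gab.1 gac.1 ((hnc _).1 gab.1) ((hnc _).1 gac.1)
    (gab.2 _ (sl a b hab)) nb nc (comb Γ hmono hnc hnr a b c gab gac hab hac)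

end Helpers

theorem stmt17 (Γ : Finset (Fin 6) → Prop)
    (hmono : Monotonic Γ) (hnc : NoCloning Γ) (hnr : NoRedundancy Γ)
    (ψ : (Fin (6 + 1) → Fin 2) → ℂ) (hψ : IsPureQSSState Γ ψ) :
    ∀ A B : Finset (Fin 6), IsMinimal Γ A → A.card = 2 →
      IsMinimal Γ B → B.card = 2 → A = B := by
  intro A B hA cA hB cB
  obtain ⟨x, y, hxy, rfl⟩ := Finset.card_eq_two.1 cA
  obtain ⟨z, w, hzw, rfl⟩ := Finset.card_eq_two.1 cB
  have M := main3 Γ hmono hnc hnr ψ hψ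
  have hint : ∃ i, i ∈ ({x, y} : Finset (Fin 6)) ∧ i ∈ ({z, w} : Finset (Fin 6)) := by
    by_contra! h
    exact (hnc _).1 hA.1 (hmono _ _ hB.1 fun i hi => mem_compl.2 fun h' => h i h' hi)
  obtain ⟨i, h1, h2⟩ := hint
  by_contra hne
  simp only [mem_insert, mem_singleton] at h1 h2
  rcases h1 with rfl | rfl <;> rcases h2 with rfl | rfl
  · exact M i y w hA hB hxy hzw (fun h => hne (by rw [h]))
  · rw [Finset.pair_comm z] at hB hne
    exact M i y z hA hB hxy hzw.symm (fun h => hne (by rw [h]))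
  · rw [Finset.pair_comm x] at hA hne
    exact M i x w hA hB hxy.symm hzw (fun h => hne (by rw [h]))
  · rw [Finset.pair_comm x] at hA hne
    rw [Finset.pair_comm z] at hB hne
    exact M i x z hA hB hxy.symm hzw.symm (fun h => hne (by rw [h]))
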